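/- arXiv:1312.7816 — 3 statements merged into one kernel-verified Lean document; each statement's English description precedes it below -/
import Mathlib

section
/- Let H, K, H', K' be convex bodies in ℝⁿ such that g_{H,K}(x) = g_{H',K'}(x) for every x ∈ ℝⁿ. Then for every u ∈ ℝⁿ, w_H(u) + w_K(u) = w_{H'}(u) + w_{K'}(u). -/
/-!
The cross covariogram `g_{H,K}` determines its support, which is the difference body `H - K`, and
the support function of `H - K` at `u` is `h_H(u) + h_K(-u)`. Adding the values of this support
function at `u` and `-u` gives `w_H(u) + w_K(u)`.

To avoid describing the support of `g_{H,K}` exactly, the two inequalities between the support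
functions are proved separately (`suppFn_add_neg_le`): `g_{H,K} > 0` on `int H - int K`, whereas
`g_{H',K'}(x) > 0` forces `x ∈ H' - K'`; convexity makes the interiors of `H` and `K` dense.
-/

open MeasureTheory Pointwise RealInnerProductSpace

/-- The cross covariogram of `H` and `K`: `g_{H,K}(x) = λ_n(H ∩ (K + x))`. -/
noncomputable def crossCovariogram {n : ℕ} (H K : Set (EuclideanSpace ℝ (Fin n)))
    (x : EuclideanSpace ℝ (Fin n)) : ℝ :=
  (volume (H ∩ ((· + x) '' K))).toReal

/-- The support function `h_L(u) = max{⟨u,y⟩ : y ∈ L}` of a convex body `L`. -/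
noncomputable def suppFn {n : ℕ} (L : Set (EuclideanSpace ℝ (Fin n)))
    (u : EuclideanSpace ℝ (Fin n)) : ℝ :=
  sSup ((fun y => ⟪u, y⟫) '' L)

/-- The width function `w_L(u) = h_L(u) + h_L(−u)` of a convex body `L`. -/
noncomputable def widthFn {n : ℕ} (L : Set (EuclideanSpace ℝ (Fin n)))
    (u : EuclideanSpace ℝ (Fin n)) : ℝ :=
  suppFn L u + suppFn L (-u)

lemma inner_le_suppFn {n : ℕ} {L : Set (EuclideanSpace ℝ (Fin n))} (hL : IsCompact L)
    (u : EuclideanSpace ℝ (Fin n)) {y : EuclideanSpace ℝ (Fin n)} (hy : y ∈ L) :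
    ⟪u, y⟫ ≤ suppFn L u :=
  le_csSup (hL.image (by fun_prop : Continuous fun y => ⟪u, y⟫)).bddAbove ⟨y, hy, rfl⟩

lemma exists_inner_eq_suppFn {n : ℕ} {L : Set (EuclideanSpace ℝ (Fin n))} (hL : IsCompact L)
    (hne : L.Nonempty) (u : EuclideanSpace ℝ (Fin n)) :
    ∃ y ∈ L, ⟪u, y⟫ = suppFn L u :=
  (hL.image (by fun_prop : Continuous fun y => ⟪u, y⟫)).sSup_mem (hne.image _)

lemma crossCovariogram_pos {n : ℕ} {H K : Set (EuclideanSpace ℝ (Fin n))} (hH : IsCompact H)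
    {y z : EuclideanSpace ℝ (Fin n)} (hy : y ∈ interior H) (hz : z ∈ interior K) :
    0 < crossCovariogram H K (y - z) := by
  have hopen : IsOpen (interior H ∩ (· + (y - z)) '' interior K) :=
    isOpen_interior.inter ((Homeomorph.addRight (y - z)).isOpenMap _ isOpen_interior)
  have hpos := hopen.measure_pos volume ⟨y, hy, z, hz, by simp⟩
  refine ENNReal.toReal_pos (hpos.trans_le (measure_mono ?_)).ne' ?_
  · exact Set.inter_subset_inter interior_subset (Set.image_mono interior_subset)
  · exact ((measure_mono Set.inter_subset_left).trans_lt hH.measure_lt_top).ne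

lemma exists_sub_eq_of_crossCovariogram_pos {n : ℕ} {H K : Set (EuclideanSpace ℝ (Fin n))}
    {x : EuclideanSpace ℝ (Fin n)} (hx : 0 < crossCovariogram H K x) :
    ∃ y ∈ H, ∃ z ∈ K, y - z = x := by
  have hne : (H ∩ (· + x) '' K).Nonempty := by
    rw [Set.nonempty_iff_ne_empty]
    intro h
    rw [crossCovariogram, h] at hx
    simp at hx
  obtain ⟨y, hy, z, hz, rfl⟩ := hne
  exact ⟨_, hy, z, hz, by simp⟩

/-- One half of the fact that the cross covariogram determines the support function
`u ↦ h_H(u) + h_K(-u)` of the difference body `H - K`. -/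
lemma suppFn_add_neg_le {n : ℕ} {H K H' K' : Set (EuclideanSpace ℝ (Fin n))}
    (hHc : IsCompact H) (hHconv : Convex ℝ H) (hHint : (interior H).Nonempty)
    (hKc : IsCompact K) (hKconv : Convex ℝ K) (hKint : (interior K).Nonempty)
    (hH'c : IsCompact H') (hK'c : IsCompact K')
    (heq : ∀ x, crossCovariogram H K x = crossCovariogram H' K' x)
    (u : EuclideanSpace ℝ (Fin n)) :
    suppFn H u + suppFn K (-u) ≤ suppFn H' u + suppFn K' (-u) := by
  obtain ⟨y, hy, hyu⟩ := exists_inner_eq_suppFn hHc (hHint.mono interior_subset) u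
  obtain ⟨z, hz, hzu⟩ := exists_inner_eq_suppFn hKc (hKint.mono interior_subset) (-u)
  have key : ∀ p ∈ interior H ×ˢ interior K,
      ⟪u, p.1⟫ + ⟪-u, p.2⟫ ≤ suppFn H' u + suppFn K' (-u) := by
    rintro ⟨a, b⟩ ⟨ha, hb⟩
    obtain ⟨a', ha', b', hb', hab⟩ :=
      exists_sub_eq_of_crossCovariogram_pos (heq _ ▸ crossCovariogram_pos hHc ha hb)
    have h1 := inner_le_suppFn hH'c u ha'
    have h2 := inner_le_suppFn hK'c (-u) hb'
    have h3 : ⟪u, a' - b'⟫ = ⟪u, a - b⟫ := by rw [hab]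
    simp only [inner_sub_right, inner_neg_left] at h2 h3 ⊢
    linarith
  have hmem : (y, z) ∈ closure (interior H ×ˢ interior K) := by
    rw [closure_prod_eq, hHconv.closure_interior_eq_closure_of_nonempty_interior hHint,
      hKconv.closure_interior_eq_closure_of_nonempty_interior hKint]
    exact ⟨subset_closure hy, subset_closure hz⟩
  rw [← hyu, ← hzu]
  exact le_on_closure (f := fun p => ⟪u, p.1⟫ + ⟪-u, p.2⟫) key (by fun_prop) (by fun_prop) hmem

/-- If two pairs of convex bodies have the same cross covariogram, then the sums of the
width functions coincide: `w_H + w_K = w_{H'} + w_{K'}`. -/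
theorem width_sum_eq_of_crossCovariogram_eq {n : ℕ}
    (H K H' K' : Set (EuclideanSpace ℝ (Fin n)))
    (hHc : IsCompact H) (hHconv : Convex ℝ H) (hHint : (interior H).Nonempty)
    (hKc : IsCompact K) (hKconv : Convex ℝ K) (hKint : (interior K).Nonempty)
    (hH'c : IsCompact H') (hH'conv : Convex ℝ H') (hH'int : (interior H').Nonempty)
    (hK'c : IsCompact K') (hK'conv : Convex ℝ K') (hK'int : (interior K').Nonempty)
    (heq : ∀ x, crossCovariogram H K x = crossCovariogram H' K' x) :
    ∀ u : EuclideanSpace ℝ (Fin n), widthFn H u + widthFn K u = widthFn H' u + widthFn K' u := by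
  intro u
  have h (v : EuclideanSpace ℝ (Fin n)) :
      suppFn H v + suppFn K (-v) = suppFn H' v + suppFn K' (-v) :=
    le_antisymm
      (suppFn_add_neg_le hHc hHconv hHint hKc hKconv hKint hH'c hK'c heq v)
      (suppFn_add_neg_le hH'c hH'conv hH'int hK'c hK'conv hK'int hHc hKc (fun x => (heq x).symm) v)
  have h1 := h u
  have h2 := h (-u)
  rw [neg_neg] at h2
  unfold widthFn
  linarith
end

section
/- Let H and K be convex bodies in ℝⁿ such that g_H(x) = g_K(x) for every x ∈ ℝⁿ. Then 𝒵(H) ∪ conj(𝒵(H)) = 𝒵(K) ∪ conj(𝒵(K)), where conj(𝒵(L)) denotes the image of 𝒵(L) under coordinatewise complex conjugation. -/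
/-!
Writing `F` for the Fourier–Laplace transform of `1_L` and `e(x) = exp (i⟨x,ζ⟩)`, the covariogram is
the convolution of `1_L` with `1_{-L}`, so the product `e · g_L` is the convolution of `1_L e` with
`1_{-L} e` and `∫ e(x) g_L(x) dx = F(ζ) F(-ζ)` (`integral_covariogram`). Since `1_L` is real,
`F(-ζ)` is the complex conjugate of `F(conj ζ)` (`fourierLaplace_neg`), so
`𝒵(L) ∪ conj 𝒵(L)` is exactly the zero set of `ζ ↦ F(ζ) F(-ζ)`, which depends only on `g_L`.
-/

open MeasureTheory Pointwise

/-- The covariogram of `K`: `g_K(x) = λ_n(K ∩ (K + x))`. -/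
noncomputable def covariogram {n : ℕ} (K : Set (EuclideanSpace ℝ (Fin n)))
    (x : EuclideanSpace ℝ (Fin n)) : ℝ :=
  (volume (K ∩ ((· + x) '' K))).toReal

/-- The Fourier–Laplace transform of the characteristic function of `L ⊂ ℝⁿ`:
`\hat{1_L}(ζ) = ∫_L e^{i⟨x,ζ⟩} dx`, where `⟨x,ζ⟩ = Σⱼ xⱼ ζⱼ`. -/
noncomputable def fourierLaplace {n : ℕ} (L : Set (EuclideanSpace ℝ (Fin n)))
    (ζ : Fin n → ℂ) : ℂ :=
  ∫ x in L, Complex.exp (Complex.I * ∑ j, (x j : ℂ) * ζ j)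

/-- The zero set `𝒵(L) = {ζ ∈ ℂⁿ : \hat{1_L}(ζ) = 0}`. -/
def zeroSet {n : ℕ} (L : Set (EuclideanSpace ℝ (Fin n))) : Set (Fin n → ℂ) :=
  {ζ | fourierLaplace L ζ = 0}

/-- Reality of `1_L`: conjugating the argument and the value of the transform amounts to
replacing `ζ` by `-ζ`. -/
lemma fourierLaplace_neg {n : ℕ} (L : Set (EuclideanSpace ℝ (Fin n))) (ζ : Fin n → ℂ) :
    fourierLaplace L (-ζ) = starRingEnd ℂ (fourierLaplace L (fun j => starRingEnd ℂ (ζ j))) := by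
  unfold fourierLaplace
  rw [← integral_conj]
  congr 1
  ext x
  rw [← Complex.exp_conj]
  simp [Finset.sum_neg_distrib]

lemma continuous_fourierKernel {n : ℕ} (ζ : Fin n → ℂ) :
    Continuous fun x : EuclideanSpace ℝ (Fin n) =>
      Complex.exp (Complex.I * ∑ j, (x j : ℂ) * ζ j) := by
  fun_prop

/-- The Fourier–Laplace transform of the covariogram, computed as the integral of the convolution
of `1_L e` with `1_{-L} e`. -/
lemma integral_covariogram {n : ℕ} {L : Set (EuclideanSpace ℝ (Fin n))} (hL : IsCompact L)
    (ζ : Fin n → ℂ) :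
    ∫ x, Complex.exp (Complex.I * ∑ j, (x j : ℂ) * ζ j) * (covariogram L x : ℂ)
      = fourierLaplace L ζ * fourierLaplace L (-ζ) := by
  set e : EuclideanSpace ℝ (Fin n) → ℂ := fun x =>
    Complex.exp (Complex.I * ∑ j, (x j : ℂ) * ζ j) with he
  have hec : Continuous e := continuous_fourierKernel ζ
  have hLm : MeasurableSet L := hL.measurableSet
  have hNm : MeasurableSet (-L) := hL.neg.measurableSet
  have hadd : ∀ x y, e x * e (y - x) = e y := by
    intro x y
    simp only [he, ← Complex.exp_add, ← mul_add, ← Finset.sum_add_distrib]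
    congr 3
    ext j
    simp
    ring
  have hf : Integrable (L.indicator e) :=
    (integrable_indicator_iff hLm).2 (hec.continuousOn.integrableOn_compact hL)
  have hh : Integrable ((-L).indicator e) :=
    (integrable_indicator_iff hNm).2 (hec.continuousOn.integrableOn_compact hL.neg)
  have key := integral_convolution (ContinuousLinearMap.mul ℝ ℂ) (μ := volume) (ν := volume) hf hh
  have h1 : ∫ x, L.indicator e x = fourierLaplace L ζ := integral_indicator hLm
  have h2 : ∫ x, (-L).indicator e x = fourierLaplace L (-ζ) := by
    rw [← integral_neg_eq_self]
    unfold fourierLaplace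
    rw [← integral_indicator hLm]
    congr 1
    ext x
    by_cases hx : x ∈ L <;> simp [hx, he]
  rw [h1, h2] at key
  rw [ContinuousLinearMap.mul_apply'] at key
  rw [← key]
  congr 1
  ext x
  have hS : MeasurableSet (L ∩ ((· + x) '' L)) :=
    (hL.inter (hL.image (by fun_prop))).measurableSet
  -- The character `e` is multiplicative, so it factors out of the convolution integrand.
  have hpt : ∀ t, L.indicator e t * (-L).indicator e (x - t)
      = (L ∩ ((· + x) '' L)).indicator (fun _ => e x) t := by
    intro t
    have hmem : t ∈ (· + x) '' L ↔ x - t ∈ -L := by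
      simp [sub_eq_add_neg]
    have hmem' : t ∈ L ∩ ((· + x) '' L) ↔ t ∈ L ∧ x - t ∈ -L := and_congr_right' hmem
    by_cases h3 : t ∈ L
    · by_cases h4 : x - t ∈ -L
      · rw [Set.indicator_of_mem h3, Set.indicator_of_mem h4,
          Set.indicator_of_mem (hmem'.2 (And.intro h3 h4)), hadd]
      · rw [Set.indicator_of_notMem h4,
          Set.indicator_of_notMem (mt (fun h => (hmem'.1 h).2) h4), mul_zero]
    · rw [Set.indicator_of_notMem h3,
        Set.indicator_of_notMem (mt (fun h => (hmem'.1 h).1) h3), zero_mul]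
  simp only [convolution, ContinuousLinearMap.mul_apply', hpt]
  rw [integral_indicator hS, setIntegral_const]
  rw [Complex.real_smul, mul_comm]
  rfl

/-- The zero set together with its conjugate is the zero set of the transform of the
covariogram. -/
lemma mem_zeroSet_union_conj {n : ℕ} (L : Set (EuclideanSpace ℝ (Fin n))) (ζ : Fin n → ℂ) :
    ζ ∈ zeroSet L ∪ (fun ζ : Fin n → ℂ => fun j => starRingEnd ℂ (ζ j)) '' zeroSet L
      ↔ fourierLaplace L ζ * fourierLaplace L (-ζ) = 0 := by
  rw [mul_eq_zero, fourierLaplace_neg, map_eq_zero]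
  refine or_congr Iff.rfl ⟨?_, fun h => ⟨_, h, by simp⟩⟩
  rintro ⟨ξ, hξ, rfl⟩
  simpa [zeroSet] using hξ

/-- If convex bodies `H, K ⊂ ℝⁿ` have the same covariogram, then
`𝒵(H) ∪ conj(𝒵(H)) = 𝒵(K) ∪ conj(𝒵(K))`. -/
theorem zeroSet_union_conj_eq_of_covariogram_eq {n : ℕ}
    (H K : Set (EuclideanSpace ℝ (Fin n)))
    (hHc : IsCompact H) (hHconv : Convex ℝ H) (hHint : (interior H).Nonempty)
    (hKc : IsCompact K) (hKconv : Convex ℝ K) (hKint : (interior K).Nonempty)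
    (heq : ∀ x, covariogram H x = covariogram K x) :
    zeroSet H ∪ (fun ζ : Fin n → ℂ => fun j => starRingEnd ℂ (ζ j)) '' zeroSet H
      = zeroSet K ∪ (fun ζ : Fin n → ℂ => fun j => starRingEnd ℂ (ζ j)) '' zeroSet K := by
  ext ζ
  rw [mem_zeroSet_union_conj, mem_zeroSet_union_conj, ← integral_covariogram hHc,
    ← integral_covariogram hKc]
  simp only [heq]
end

section
/- Let H, K, H', K' be convex bodies in ℝⁿ such that g_{H,K}(x) = g_{H',K'}(x) for every x ∈ ℝⁿ. Then 𝒵(H) ∪ 𝒵(−K) = 𝒵(H') ∪ 𝒵(−K'). -/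
/-!
The cross covariogram `g_{H,K}` is the convolution of `1_H` with `1_{-K}`. The weight
`x ↦ e^{i⟨x,ζ⟩}` is multiplicative on sums, so the Fourier–Laplace transform turns this convolution
into a product, also for complex `ζ` because the sets are compact:
`∫ e^{i⟨x,ζ⟩} g_{H,K}(x) dx = \hat{1_H}(ζ) \hat{1_{-K}}(ζ)` (`fourierLaplace_mul_fourierLaplace_neg`).
The left side depends only on `g_{H,K}`, and the zero set of the right side is `𝒵(H) ∪ 𝒵(-K)`.
-/

open MeasureTheory Pointwise

/-- The exponential weight `x ↦ e^{i⟨x,ζ⟩}` for a complex frequency `ζ`. -/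
noncomputable def expWeight {n : ℕ} (ζ : Fin n → ℂ) (x : EuclideanSpace ℝ (Fin n)) : ℂ :=
  Complex.exp (Complex.I * ∑ j, (x j : ℂ) * ζ j)

theorem continuous_expWeight {n : ℕ} (ζ : Fin n → ℂ) : Continuous (expWeight ζ) := by
  unfold expWeight
  fun_prop

theorem expWeight_mul_sub {n : ℕ} (ζ : Fin n → ℂ) (t x : EuclideanSpace ℝ (Fin n)) :
    expWeight ζ t * expWeight ζ (x - t) = expWeight ζ x := by
  unfold expWeight
  rw [← Complex.exp_add, ← mul_add, ← Finset.sum_add_distrib]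
  congr 2
  refine Finset.sum_congr rfl fun j _ => ?_
  simp only [PiLp.sub_apply]
  push_cast
  ring

theorem integrable_indicator_expWeight {n : ℕ} {L : Set (EuclideanSpace ℝ (Fin n))}
    (hL : IsCompact L) (ζ : Fin n → ℂ) : Integrable (L.indicator (expWeight ζ)) :=
  (integrable_indicator_iff hL.measurableSet).2
    ((continuous_expWeight ζ).continuousOn.integrableOn_compact hL)

theorem fourierLaplace_eq_integral_indicator {n : ℕ} {L : Set (EuclideanSpace ℝ (Fin n))}
    (hL : IsCompact L) (ζ : Fin n → ℂ) :
    fourierLaplace L ζ = ∫ x, L.indicator (expWeight ζ) x :=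
  (integral_indicator hL.measurableSet).symm

/-- The cross covariogram, weighted by `e^{i⟨x,ζ⟩}`, is a convolution of weighted indicators. -/
theorem convolution_indicator_expWeight {n : ℕ} {H K : Set (EuclideanSpace ℝ (Fin n))}
    (hH : IsCompact H) (hK : IsCompact K) (ζ : Fin n → ℂ) (x : EuclideanSpace ℝ (Fin n)) :
    convolution (H.indicator (expWeight ζ)) ((-K).indicator (expWeight ζ))
      (ContinuousLinearMap.mul ℝ ℂ) volume x = crossCovariogram H K x * expWeight ζ x := by
  have hmeas : MeasurableSet (H ∩ ((· + x) '' K)) :=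
    hH.measurableSet.inter (hK.image (continuous_add_const x)).measurableSet
  have hpt : ∀ t, H.indicator (expWeight ζ) t * (-K).indicator (expWeight ζ) (x - t)
      = (H ∩ ((· + x) '' K)).indicator (fun _ => expWeight ζ x) t := by
    intro t
    have hmem : x - t ∈ -K ↔ t ∈ (· + x) '' K := by
      simp [Set.mem_neg, sub_eq_add_neg]
    classical
    simp only [Set.indicator_apply, Set.mem_inter_iff, hmem]
    by_cases h1 : t ∈ H <;> by_cases h2 : t ∈ (· + x) '' K <;>
      simp only [h1, h2, if_true, if_false, and_self, and_true, and_false,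
        mul_zero, zero_mul, expWeight_mul_sub]
  simp only [convolution, ContinuousLinearMap.mul_apply', hpt]
  rw [integral_indicator hmeas, setIntegral_const, crossCovariogram, Measure.real,
    Complex.real_smul]

theorem fourierLaplace_mul_fourierLaplace_neg {n : ℕ} {H K : Set (EuclideanSpace ℝ (Fin n))}
    (hH : IsCompact H) (hK : IsCompact K) (ζ : Fin n → ℂ) :
    fourierLaplace H ζ * fourierLaplace (-K) ζ
      = ∫ x, (crossCovariogram H K x : ℂ) * expWeight ζ x := by
  rw [fourierLaplace_eq_integral_indicator hH, fourierLaplace_eq_integral_indicator hK.neg]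
  simp only [← convolution_indicator_expWeight hH hK]
  exact (integral_convolution (ContinuousLinearMap.mul ℝ ℂ)
    (integrable_indicator_expWeight hH ζ) (integrable_indicator_expWeight hK.neg ζ)).symm

/-- If two pairs of convex bodies `(H,K)` and `(H',K')` in `ℝⁿ` have the same cross
covariogram, then `𝒵(H) ∪ 𝒵(−K) = 𝒵(H') ∪ 𝒵(−K')`. -/
theorem zeroSet_union_eq_of_crossCovariogram_eq {n : ℕ}
    (H K H' K' : Set (EuclideanSpace ℝ (Fin n)))
    (hHc : IsCompact H) (hHconv : Convex ℝ H) (hHint : (interior H).Nonempty)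
    (hKc : IsCompact K) (hKconv : Convex ℝ K) (hKint : (interior K).Nonempty)
    (hH'c : IsCompact H') (hH'conv : Convex ℝ H') (hH'int : (interior H').Nonempty)
    (hK'c : IsCompact K') (hK'conv : Convex ℝ K') (hK'int : (interior K').Nonempty)
    (heq : ∀ x, crossCovariogram H K x = crossCovariogram H' K' x) :
    zeroSet H ∪ zeroSet (-K) = zeroSet H' ∪ zeroSet (-K') := by
  ext ζ
  simp only [Set.mem_union, zeroSet, Set.mem_ofPred_eq, ← mul_eq_zero]
  rw [fourierLaplace_mul_fourierLaplace_neg hHc hKc,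
    fourierLaplace_mul_fourierLaplace_neg hH'c hK'c]
  simp only [heq]
end
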